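/- If a positive linear map Φ : M_n(ℂ) → M_m(ℂ) satisfies tr[Φ†(K*) Φ†(Y)^{t-1} Φ†(K) Φ†(X)^{-t}] ≤ tr[K* Y^{t-1} K X^{-t}] for all 0 ≤ t ≤ 1, all positive definite X, Y ∈ M_m(ℂ) and all K ∈ M_m(ℂ), then Φ is a Schwarz map. -/

import Mathlib

open Matrix
open scoped ComplexOrder

/-- Real power of a matrix, defined spectrally for Hermitian matrices (junk value `0` otherwise). -/
noncomputable def mpow {k : ℕ} (A : Matrix (Fin k) (Fin k) ℂ) (p : ℝ) : Matrix (Fin k) (Fin k) ℂ :=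
  if hA : A.IsHermitian then
    (hA.eigenvectorUnitary : Matrix (Fin k) (Fin k) ℂ) *
      Matrix.diagonal (fun i => ((hA.eigenvalues i ^ p : ℝ) : ℂ)) *
      (hA.eigenvectorUnitary : Matrix (Fin k) (Fin k) ℂ)ᴴ
  else 0

/-- A Schwarz map: `Φ(K*K) ≥ Φ(K)*Φ(K)` for all `K`. -/
def IsSchwarz {a b : ℕ} (Φ : Matrix (Fin a) (Fin a) ℂ →ₗ[ℂ] Matrix (Fin b) (Fin b) ℂ) : Prop :=
  ∀ K, (Φ (Kᴴ * K) - (Φ K)ᴴ * Φ K).PosSemidef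

/-- A positive map: sends positive semidefinite matrices to positive semidefinite matrices. -/
def IsPositiveMap {a b : ℕ} (Φ : Matrix (Fin a) (Fin a) ℂ →ₗ[ℂ] Matrix (Fin b) (Fin b) ℂ) : Prop :=
  ∀ X, X.PosSemidef → (Φ X).PosSemidef

/-- `Ψ` is the Hilbert–Schmidt adjoint of `Φ`: `⟨X, Φ Y⟩ = ⟨Ψ X, Y⟩`. -/
def IsHSAdjoint {a b : ℕ} (Φ : Matrix (Fin a) (Fin a) ℂ →ₗ[ℂ] Matrix (Fin b) (Fin b) ℂ)
    (Ψ : Matrix (Fin b) (Fin b) ℂ →ₗ[ℂ] Matrix (Fin a) (Fin a) ℂ) : Prop :=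
  ∀ X Y, (Xᴴ * Φ Y).trace = ((Ψ X)ᴴ * Y).trace

/-!
The case `t = 0`, `X = 1` is the tracial inequality `tr[Ψ(Kᴴ) Ψ(Y)⁺ Ψ(K)] ≤ tr[Kᴴ Y⁻¹ K]`, with
`⁺` the Moore–Penrose inverse, and it already forces the Schwarz inequality.

Let `A = Ψ(Y)` with `Y` positive definite. If `A E = 0`, then `tr[Y Φ(E Eᴴ)] = 0`, so
`Φ(E Eᴴ) = 0`, so `tr[Ψ(X) E Eᴴ] = 0` and `Ψ(X) E = 0` for all `X ≥ 0`, hence for all `X`; in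
particular `T A⁺ A = T` for every `T` in the range of `Ψ`. Take `T = Ψ(Φ(L) Y)`. Expanding
`tr[(L - T A⁺) A (L - T A⁺)ᴴ] ≥ 0` gives
`2 Re tr[T Lᴴ] ≤ tr[L A Lᴴ] + tr[T A⁺ Tᴴ]`.
Here `tr[L A Lᴴ] = tr[Φ(Lᴴ L) Y]` and `tr[T Lᴴ] = tr[Φ(L)ᴴ Φ(L) Y]` by adjointness, and
`tr[T A⁺ Tᴴ] ≤ tr[Φ(L)ᴴ Φ(L) Y]` by the tracial inequality. Hence
`tr[Φ(L)ᴴ Φ(L) Y] ≤ tr[Φ(Lᴴ L) Y]` for every positive definite `Y`.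
-/

section Trace

variable {𝕜 ι κ : Type*} [RCLike 𝕜] [Fintype ι] [Fintype κ]

theorem exists_eq_conjTranspose_mul_self_of_posSemidef {A : Matrix ι ι 𝕜} (hA : A.PosSemidef) :
    ∃ C : Matrix ι ι 𝕜, A = Cᴴ * C := by
  classical
  open scoped MatrixOrder in
  exact CStarAlgebra.nonneg_iff_eq_star_mul_self.mp hA.nonneg

theorem trace_mul_nonneg_of_posSemidef {A B : Matrix ι ι 𝕜} (hA : A.PosSemidef)
    (hB : B.PosSemidef) : 0 ≤ (A * B).trace := by
  obtain ⟨C, rfl⟩ := exists_eq_conjTranspose_mul_self_of_posSemidef hA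
  rw [← trace_mul_cycle]
  exact (hB.mul_mul_conjTranspose_same C).trace_nonneg

theorem mul_eq_zero_of_trace_mul_mul_conjTranspose_eq_zero {A : Matrix ι ι 𝕜} {E : Matrix ι κ 𝕜}
    (hA : A.PosSemidef) (h : (A * (E * Eᴴ)).trace = 0) : A * E = 0 := by
  obtain ⟨C, rfl⟩ := exists_eq_conjTranspose_mul_self_of_posSemidef hA
  have hCE : C * E = 0 := by
    rw [← trace_mul_conjTranspose_self_eq_zero_iff, ← h, conjTranspose_mul, ← Matrix.mul_assoc,
      trace_mul_comm]
    simp only [Matrix.mul_assoc]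
  rw [Matrix.mul_assoc, hCE, Matrix.mul_zero]

theorem eq_zero_of_trace_posDef_mul_eq_zero {Y P : Matrix ι ι 𝕜} (hY : Y.PosDef)
    (hP : P.PosSemidef) (h : (Y * P).trace = 0) : P = 0 := by
  classical
  obtain ⟨C, rfl⟩ := exists_eq_conjTranspose_mul_self_of_posSemidef hP
  have hYC : Y * Cᴴ = 0 :=
    mul_eq_zero_of_trace_mul_mul_conjTranspose_eq_zero hY.posSemidef
      (by rwa [conjTranspose_conjTranspose])
  rw [hY.isUnit.mul_right_eq_zero.mp hYC, Matrix.zero_mul]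

open Filter Topology in
theorem posSemidef_of_forall_posDef_re_trace_mul_nonneg {M : Matrix ι ι 𝕜} (hM : M.IsHermitian)
    (h : ∀ Y : Matrix ι ι 𝕜, Y.PosDef → 0 ≤ RCLike.re (M * Y).trace) : M.PosSemidef := by
  classical
  refine .of_dotProduct_mulVec_nonneg hM fun x ↦ ?_
  have h_perturbed : ∀ ε : ℝ, 0 < ε →
      0 ≤ RCLike.re (star x ⬝ᵥ M *ᵥ x) + ε * RCLike.re M.trace := by
    intro ε hε
    have hY : (vecMulVec x (star x) + (ε : 𝕜) • (1 : Matrix ι ι 𝕜)).PosDef :=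
      .posSemidef_add (posSemidef_vecMulVec_self_star x)
        (PosDef.one.smul (RCLike.ofReal_pos.mpr hε))
    simpa [mul_add, mul_vecMulVec, trace_vecMulVec, dotProduct_comm, RCLike.smul_re] using h _ hY
  have h_tendsto : Tendsto
      (fun ε : ℝ ↦ RCLike.re (star x ⬝ᵥ M *ᵥ x) + ε * RCLike.re M.trace)
      (𝓝[>] 0) (𝓝 (RCLike.re (star x ⬝ᵥ M *ᵥ x))) :=
    (Continuous.tendsto' (by fun_prop) _ _ (by simp)).mono_left nhdsWithin_le_nhds
  exact RCLike.nonneg_iff.mpr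
    ⟨ge_of_tendsto h_tendsto (eventually_mem_nhdsWithin.mono h_perturbed),
      hM.im_star_dotProduct_mulVec_self x⟩

theorem two_mul_re_trace_mul_conjTranspose_le {A B : Matrix ι ι 𝕜} {T : Matrix κ ι 𝕜}
    (hA : A.PosSemidef) (hB : B.IsHermitian) (hT : T * B * A = T) (L : Matrix κ ι 𝕜) :
    2 * RCLike.re (T * Lᴴ).trace ≤
      RCLike.re (L * A * Lᴴ).trace + RCLike.re (T * B * Tᴴ).trace := by
  have hT' : A * (B * Tᴴ) = Tᴴ := by
    simpa only [conjTranspose_mul, hA.isHermitian.eq, hB.eq] using congrArg conjTranspose hT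
  have h_expand : (L - T * B) * A * (L - T * B)ᴴ =
      L * A * Lᴴ - L * Tᴴ - T * Lᴴ + T * B * Tᴴ := by
    rw [conjTranspose_sub, conjTranspose_mul, hB.eq, Matrix.sub_mul, hT, Matrix.mul_sub,
      Matrix.sub_mul, Matrix.sub_mul, Matrix.mul_assoc L A (B * Tᴴ), hT', ← Matrix.mul_assoc T]
    abel
  have h_conj : RCLike.re (L * Tᴴ).trace = RCLike.re (T * Lᴴ).trace := by
    rw [← RCLike.conj_re, ← RCLike.star_def, ← trace_conjTranspose, conjTranspose_mul,
      conjTranspose_conjTranspose]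
  have h_square : 0 ≤ RCLike.re ((L - T * B) * A * (L - T * B)ᴴ).trace :=
    (RCLike.nonneg_iff.mp (hA.mul_mul_conjTranspose_same (L - T * B)).trace_nonneg).1
  rw [h_expand] at h_square
  simp only [trace_add, trace_sub, map_add, map_sub, h_conj] at h_square
  linarith

end Trace

section Mpow

variable {k : ℕ} {A : Matrix (Fin k) (Fin k) ℂ}

theorem mpow_eq_cfc (hA : A.IsHermitian) (p : ℝ) : mpow A p = cfc (fun x : ℝ ↦ x ^ p) A := by
  rw [hA.cfc_eq, IsHermitian.cfc, Unitary.conjStarAlgAut_apply, mpow, dif_pos hA]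
  rfl

theorem isHermitian_mpow (hA : A.IsHermitian) (p : ℝ) : (mpow A p).IsHermitian := by
  rw [mpow_eq_cfc hA]
  exact cfc_predicate _ A

theorem mpow_zero (hA : A.IsHermitian) : mpow A 0 = 1 := by
  simp only [mpow_eq_cfc hA, Real.rpow_zero]
  exact cfc_const_one ℝ A

-- As `0 ^ (-1) = 0` in `ℝ`, `mpow A (-1)` is the Moore–Penrose inverse of a singular `A`.
theorem mul_mpow_neg_one_mul_self (hA : A.IsHermitian) : A * mpow A (-1) * A = A := by
  have hcont (f : ℝ → ℝ) : ContinuousOn f (spectrum ℝ A) := A.finite_real_spectrum.continuousOn f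
  calc A * mpow A (-1) * A
      = cfc (fun x : ℝ ↦ x) A * cfc (fun x : ℝ ↦ x ^ (-1 : ℝ)) A * cfc (fun x : ℝ ↦ x) A := by
        rw [cfc_id' ℝ A, mpow_eq_cfc hA]
    _ = cfc (fun x : ℝ ↦ x * x ^ (-1 : ℝ) * x) A := by
        rw [cfc_mul _ _ A (hcont _) (hcont _), cfc_mul _ _ A (hcont _) (hcont _)]
    _ = A := by
        simp only [Real.rpow_neg_one, mul_inv_mul_cancel, cfc_id' ℝ A]

theorem mpow_neg_one_of_posDef (hA : A.PosDef) : mpow A (-1) = A⁻¹ := by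
  refine (inv_eq_right_inv (hA.isUnit.mul_right_cancel ?_)).symm
  rw [mul_mpow_neg_one_mul_self hA.isHermitian, one_mul]

end Mpow

section Adjoint

variable {a b : ℕ} {Φ : Matrix (Fin a) (Fin a) ℂ →ₗ[ℂ] Matrix (Fin b) (Fin b) ℂ}
  {Ψ : Matrix (Fin b) (Fin b) ℂ →ₗ[ℂ] Matrix (Fin a) (Fin a) ℂ}

open scoped MatrixOrder in
theorem IsPositiveMap.map_conjTranspose (hΦ : IsPositiveMap Φ) (K : Matrix (Fin a) (Fin a) ℂ) :
    Φ Kᴴ = (Φ K)ᴴ :=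
  map_star (PositiveLinearMap.mk₀ Φ fun X hX ↦ (hΦ X hX.posSemidef).nonneg) K

namespace IsHSAdjoint

theorem map_conjTranspose (hadj : IsHSAdjoint Φ Ψ) (hΦ : ∀ K, Φ Kᴴ = (Φ K)ᴴ)
    (K : Matrix (Fin b) (Fin b) ℂ) : Ψ Kᴴ = (Ψ K)ᴴ := by
  refine conjTranspose_injective (ext_iff_trace_mul_right.mpr fun Y ↦ ?_)
  calc ((Ψ Kᴴ)ᴴ * Y).trace
      = (K * Φ Y).trace := by rw [← hadj, conjTranspose_conjTranspose]
    _ = star ((Kᴴ * Φ Yᴴ).trace) := by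
        rw [← trace_conjTranspose, hΦ, conjTranspose_mul, conjTranspose_conjTranspose,
          conjTranspose_conjTranspose, trace_mul_comm]
    _ = ((Ψ K)ᴴᴴ * Y).trace := by
        rw [hadj, ← trace_conjTranspose, conjTranspose_mul, conjTranspose_conjTranspose,
          trace_mul_comm, conjTranspose_conjTranspose]

theorem trace_map_mul (hadj : IsHSAdjoint Φ Ψ) (hΦ : ∀ K, Φ Kᴴ = (Φ K)ᴴ)
    (X : Matrix (Fin b) (Fin b) ℂ) (Y : Matrix (Fin a) (Fin a) ℂ) :
    (Ψ X * Y).trace = (X * Φ Y).trace := by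
  rw [← conjTranspose_conjTranspose (Ψ X), ← hadj.map_conjTranspose hΦ, ← hadj,
    conjTranspose_conjTranspose]

theorem isPositiveMap (hadj : IsHSAdjoint Φ Ψ) (hΦ : IsPositiveMap Φ) : IsPositiveMap Ψ := by
  intro X hX
  refine posSemidef_of_forall_posDef_re_trace_mul_nonneg ?_ fun Y hY ↦ ?_
  · rw [IsHermitian, ← hadj.map_conjTranspose hΦ.map_conjTranspose, hX.isHermitian.eq]
  · rw [hadj.trace_map_mul hΦ.map_conjTranspose]
    exact (RCLike.nonneg_iff.mp (trace_mul_nonneg_of_posSemidef hX (hΦ Y hY.posSemidef))).1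

open scoped MatrixOrder in
theorem map_mul_eq_zero (hadj : IsHSAdjoint Φ Ψ) (hΦ : IsPositiveMap Φ)
    {Y : Matrix (Fin b) (Fin b) ℂ} (hY : Y.PosDef) {E : Matrix (Fin a) (Fin a) ℂ}
    (hE : Ψ Y * E = 0) (K : Matrix (Fin b) (Fin b) ℂ) : Ψ K * E = 0 := by
  have hΦE : Φ (E * Eᴴ) = 0 := by
    refine eq_zero_of_trace_posDef_mul_eq_zero hY (hΦ _ (posSemidef_self_mul_conjTranspose E)) ?_
    rw [← hadj.trace_map_mul hΦ.map_conjTranspose, ← mul_assoc, hE, zero_mul, trace_zero]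
  have h_posSemidef (X : Matrix (Fin b) (Fin b) ℂ) (hX : X.PosSemidef) : Ψ X * E = 0 := by
    refine mul_eq_zero_of_trace_mul_mul_conjTranspose_eq_zero (hadj.isPositiveMap hΦ X hX) ?_
    rw [hadj.trace_map_mul hΦ.map_conjTranspose, hΦE, mul_zero, trace_zero]
  have h_span : LinearMap.mulRight ℂ E ∘ₗ Ψ = 0 :=
    LinearMap.ext_on CStarAlgebra.span_nonneg fun X hX ↦ h_posSemidef X hX.posSemidef
  exact LinearMap.congr_fun h_span K

theorem map_mul_mpow_neg_one_mul (hadj : IsHSAdjoint Φ Ψ) (hΦ : IsPositiveMap Φ)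
    {Y : Matrix (Fin b) (Fin b) ℂ} (hY : Y.PosDef) (K : Matrix (Fin b) (Fin b) ℂ) :
    Ψ K * mpow (Ψ Y) (-1) * Ψ Y = Ψ K := by
  have h_kernel : Ψ Y * (mpow (Ψ Y) (-1) * Ψ Y - 1) = 0 := by
    rw [mul_sub, ← mul_assoc, mul_one, sub_eq_zero]
    exact mul_mpow_neg_one_mul_self (hadj.isPositiveMap hΦ Y hY.posSemidef).isHermitian
  have hK := hadj.map_mul_eq_zero hΦ hY h_kernel K
  rwa [mul_sub, ← mul_assoc, mul_one, sub_eq_zero] at hK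

end IsHSAdjoint

theorem stmt3_general (hpos : IsPositiveMap Φ) (hadj : IsHSAdjoint Φ Ψ)
    (hineq : ∀ Y : Matrix (Fin b) (Fin b) ℂ, Y.PosDef → ∀ K : Matrix (Fin b) (Fin b) ℂ,
      (Ψ Kᴴ * mpow (Ψ Y) (-1) * Ψ K).trace.re ≤ (Kᴴ * Y⁻¹ * K).trace.re) :
    IsSchwarz Φ := by
  have hΦ := hpos.map_conjTranspose
  intro L
  refine posSemidef_of_forall_posDef_re_trace_mul_nonneg
    ((hpos _ (posSemidef_conjTranspose_mul_self L)).isHermitian.sub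
      (isHermitian_conjTranspose_mul_self (Φ L))) fun Y hY ↦ ?_
  have hΨY := hadj.isPositiveMap hpos Y hY.posSemidef
  have h_young := two_mul_re_trace_mul_conjTranspose_le hΨY (isHermitian_mpow hΨY.isHermitian (-1))
    (hadj.map_mul_mpow_neg_one_mul hpos hY (Φ L * Y)) L
  have h_quad : (L * Ψ Y * Lᴴ).trace = (Φ (Lᴴ * L) * Y).trace := by
    rw [trace_mul_cycle, trace_mul_comm, hadj.trace_map_mul hΦ, trace_mul_comm]
  have h_cross : (Ψ (Φ L * Y) * Lᴴ).trace = ((Φ L)ᴴ * Φ L * Y).trace := by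
    rw [hadj.trace_map_mul hΦ, hΦ, trace_mul_comm, mul_assoc]
  have h_inv : (Φ L * Y * Y⁻¹ * (Φ L * Y)ᴴ).trace = ((Φ L)ᴴ * Φ L * Y).trace := by
    rw [mul_nonsing_inv_cancel_right _ _ ((isUnit_iff_isUnit_det Y).mp hY.isUnit),
      conjTranspose_mul, hY.isHermitian.eq, ← mul_assoc, trace_mul_comm, mul_assoc]
  have h_tracial := hineq Y hY (Φ L * Y)ᴴ
  rw [conjTranspose_conjTranspose, hadj.map_conjTranspose hΦ, h_inv] at h_tracial
  rw [h_quad, h_cross] at h_young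
  rw [sub_mul, trace_sub, map_sub]
  simp only [RCLike.re_to_complex] at h_young ⊢
  linarith

end Adjoint

theorem stmt3 {n m : ℕ}
    (Φ : Matrix (Fin n) (Fin n) ℂ →ₗ[ℂ] Matrix (Fin m) (Fin m) ℂ)
    (Ψ : Matrix (Fin m) (Fin m) ℂ →ₗ[ℂ] Matrix (Fin n) (Fin n) ℂ)
    (hpos : IsPositiveMap Φ) (hadj : IsHSAdjoint Φ Ψ)
    (hineq : ∀ (t : ℝ), 0 ≤ t → t ≤ 1 →
      ∀ (X Y : Matrix (Fin m) (Fin m) ℂ), X.PosDef → Y.PosDef →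
      ∀ (K : Matrix (Fin m) (Fin m) ℂ),
        (Ψ Kᴴ * mpow (Ψ Y) (t - 1) * Ψ K * mpow (Ψ X) (-t)).trace.re ≤
          (Kᴴ * mpow Y (t - 1) * K * mpow X (-t)).trace.re) :
    IsSchwarz Φ := by
  refine stmt3_general hpos hadj fun Y hY K ↦ ?_
  have hΨ_one := (hadj.isPositiveMap hpos 1 .one).isHermitian
  simpa [mpow_zero hΨ_one, mpow_zero isHermitian_one, mpow_neg_one_of_posDef hY] using
    hineq 0 le_rfl zero_le_one 1 Y .one hY K
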